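/- Let G = (V,E) be a finite directed acyclic graph with source s and target t in which every node lies on at least one directed s–t path, and let u, v ∈ V. If σ_u > σ_v, then there exists ε > 0 such that for all p ∈ (1 − ε, 1) the intermediacies satisfy φ_u(p) > φ_v(p). -/

import Mathlib

open scoped Classical

/-- `PathIn F a b l` means `l` is the list of edges of a directed walk from `a` to `b`
all of whose edges belong to the edge set `F`.  (In a directed acyclic graph every
walk is a path.) -/
inductive PathIn {V : Type*} (F : Finset (V × V)) : V → V → List (V × V) → Prop
  | nil (a : V) : PathIn F a a []
  | cons {a b c : V} {l : List (V × V)} (hab : (a, b) ∈ F) (h : PathIn F b c l) :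
      PathIn F a c ((a, b) :: l)

/-- The directed graph with edge set `E` is acyclic: the only directed path from a
node to itself is the empty one. -/
def Acyclic {V : Type*} (E : Finset (V × V)) : Prop :=
  ∀ (a : V) (l : List (V × V)), PathIn E a a l → l = []

/-- There exists a directed path from `a` to `b` with all edges in `E`. -/
def Reaches {V : Type*} (E : Finset (V × V)) (a b : V) : Prop :=
  ∃ l, PathIn E a b l

/-- `l` is a directed path from `s` to `t` in `E` passing through `v`. -/
def ThroughPath {V : Type*} (E : Finset (V × V)) (s t v : V) (l : List (V × V)) : Prop :=
  PathIn E s t l ∧ (v = s ∨ v ∈ l.map Prod.snd)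

/-- Some directed `s`–`t` path through `v` (in the graph with edge set `E`) has all
its edges in `S`. -/
def ActiveThrough {V : Type*} (E S : Finset (V × V)) (s t v : V) : Prop :=
  ∃ l, ThroughPath E s t v l ∧ ∀ e ∈ l, e ∈ S

/-- The intermediacy `φ_v(p)`: the probability that a random edge subset `S ⊆ E`,
drawn with probability `p^|S| (1-p)^(|E|-|S|)`, contains all edges of some directed
`s`–`t` path through `v`. -/
noncomputable def intermediacy {V : Type*} [DecidableEq V] (E : Finset (V × V)) (p : ℝ)
    (s t v : V) : ℝ :=
  ∑ S ∈ E.powerset, p ^ S.card * (1 - p) ^ (E.card - S.card) *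
    (if ActiveThrough E S s t v then 1 else 0)

/-- `Pr(X_{ab} = 1)`: the probability that a random edge subset `S ⊆ E` contains all
edges of some directed path from `a` to `b`. -/
noncomputable def prReach {V : Type*} [DecidableEq V] (E : Finset (V × V)) (p : ℝ)
    (a b : V) : ℝ :=
  ∑ S ∈ E.powerset, p ^ S.card * (1 - p) ^ (E.card - S.card) *
    (if ∃ l, PathIn E a b l ∧ ∀ e ∈ l, e ∈ S then 1 else 0)

/-- `ℓ_v`: the length of a shortest directed `s`–`t` path passing through `v`. -/
noncomputable def shortestThrough {V : Type*} (E : Finset (V × V)) (s t v : V) : ℕ :=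
  sInf {n | ∃ l, ThroughPath E s t v l ∧ l.length = n}

/-- `σ_v`: the maximum number of pairwise edge-disjoint directed `s`–`t` paths all
passing through `v`. -/
noncomputable def maxDisjointThrough {V : Type*} (E : Finset (V × V)) (s t v : V) : ℕ :=
  sSup {n | ∃ P : Finset (List (V × V)), P.card = n ∧ (∀ l ∈ P, ThroughPath E s t v l) ∧
    ∀ l₁ ∈ P, ∀ l₂ ∈ P, l₁ ≠ l₂ → ∀ e, e ∈ l₁ → e ∉ l₂}

/-!
Unless `w = s = t`, as `p → 1` the failure probability `1 - φ_w(p)` has order `(1 - p) ^ σ_w`. A set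
of active edges contains no path through `w` exactly when its complement meets all these paths,
which takes at least `σ_w` edges; and by Menger's theorem, applied from `s` to `w` and from `w` to
`t`, some cut has only `σ_w` edges, since in an acyclic graph paths of the first kind are
edge-disjoint from paths of the second.

Menger's theorem comes from Hall's marriage theorem. Add `k` return edges from `b` to `a` and look
for an injective assignment of a successor to every edge, where an original edge may be its own
successor. If Hall's condition fails for a set of edges, the edges outside it which leave the
targets of its members form a cut with fewer than `k` edges. Otherwise the orbits between
consecutive visits to the return edges are `k` edge-disjoint paths from `a` to `b`.
-/

open Filter Topology Function Relation

/-- A transversal of the lists satisfying `Q`: a finite set meeting each of them. For `Q` the paths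
of a given kind in a graph, this is an edge cut. -/
def IsTransversal {α : Type*} (Q : List α → Prop) (C : Finset α) : Prop :=
  ∀ l, Q l → ∃ e ∈ l, e ∈ C

theorem IsTransversal.card_le {α : Type*} {Q : List α → Prop} {C : Finset α}
    (hC : IsTransversal Q C) {P : Finset (List α)} (hQ : ∀ l ∈ P, Q l)
    (hP : (P : Set (List α)).Pairwise List.Disjoint) : P.card ≤ C.card := by
  refine Finset.card_le_card_of_forall_subsingleton (fun l e => e ∈ l)
    (fun l hl => (hC l (hQ l hl)).imp fun _ => And.symm) ?_
  rintro e - l₁ ⟨hl₁, he₁⟩ l₂ ⟨hl₂, he₂⟩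
  by_contra hne
  exact hP hl₁ hl₂ hne he₁ he₂

section Paths

variable {V : Type*} {E : Finset (V × V)} {a b c : V} {l m : List (V × V)}

theorem PathIn.append (hl : PathIn E a b l) (hm : PathIn E b c m) : PathIn E a c (l ++ m) := by
  induction hl with
  | nil => exact hm
  | cons hab _ ih => exact .cons hab (ih hm)

theorem PathIn.singleton {e : V × V} (he : e ∈ E) : PathIn E e.1 e.2 [e] :=
  .cons he (.nil _)

theorem PathIn.mem_of_mem (hl : PathIn E a b l) {e : V × V} (he : e ∈ l) : e ∈ E := by
  induction hl with
  | nil => simp at he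
  | cons hab _ ih =>
    rcases List.mem_cons.1 he with rfl | he
    · exact hab
    · exact ih he

theorem PathIn.exists_eq_append_cons (hl : PathIn E a b l) {e : V × V} (he : e ∈ l) :
    ∃ l₁ l₂, l = l₁ ++ e :: l₂ ∧ PathIn E a e.1 l₁ ∧ PathIn E e.2 b l₂ := by
  induction hl with
  | nil => simp at he
  | @cons a _ _ l hab hl ih =>
    rcases List.mem_cons.1 he with rfl | he
    · exact ⟨[], l, rfl, .nil _, hl⟩
    · obtain ⟨l₁, l₂, rfl, h₁, h₂⟩ := ih he
      exact ⟨_ :: l₁, l₂, rfl, .cons hab h₁, h₂⟩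

theorem PathIn.exists_mem_of_leaves (hl : PathIn E a b l) {W : Set V} {C : Finset (V × V)}
    (hW : ∀ e ∈ E, e.1 ∈ W → e.2 ∈ W ∨ e ∈ C) (ha : a ∈ W) (hb : b ∉ W) : ∃ e ∈ l, e ∈ C := by
  induction hl with
  | nil => exact absurd ha hb
  | cons hab _ ih =>
    rcases hW _ hab ha with hc | hC
    · obtain ⟨e, he, heC⟩ := ih hc hb
      exact ⟨e, List.mem_cons_of_mem _ he, heC⟩
    · exact ⟨_, List.mem_cons_self, hC⟩

theorem PathIn.eq_or_mem_map_snd (hl : PathIn E a b l) : b = a ∨ b ∈ l.map Prod.snd := by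
  induction hl with
  | nil => exact .inl rfl
  | cons _ _ ih => rcases ih with rfl | hb <;> simp [*]

theorem Acyclic.disjoint_of_pathIn (hE : Acyclic E) (hl : PathIn E a b l) (hm : PathIn E b c m) :
    l.Disjoint m := by
  intro e hel hem
  obtain ⟨-, l₂, -, -, hl₂⟩ := hl.exists_eq_append_cons hel
  obtain ⟨m₁, -, -, hm₁, -⟩ := hm.exists_eq_append_cons hem
  have hcycle := hE _ _ (PathIn.cons (hl.mem_of_mem hel) (hl₂.append hm₁))
  simp at hcycle

end Paths

section FirstReturn

variable {α : Type*} {f : α → α} {T : Set α} {x y z : α}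

/-- One step of the iteration of `f`, allowed as long as it does not enter `T`; its reflexive
transitive closure describes the excursions of `f` outside `T`. -/
def AvoidingStep (f : α → α) (T : Set α) (x y : α) : Prop :=
  f x = y ∧ y ∉ T

theorem exists_reflTransGen_avoidingStep_apply_mem [Finite α] (hf : Injective f) (hx : x ∈ T) :
    ∃ y, ReflTransGen (AvoidingStep f T) x y ∧ f y ∈ T := by
  by_contra! hT
  let R : Set α := {y | ReflTransGen (AvoidingStep f T) x y}
  have hmaps : Set.MapsTo f R R := fun y hy => hy.tail ⟨rfl, hT y hy⟩
  have himage : f '' R = R := Set.eq_of_subset_of_ncard_le hmaps.image_subset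
    (Set.ncard_image_of_injective R hf).ge
  obtain ⟨y, hy, rfl⟩ : x ∈ f '' R := himage.symm ▸ (ReflTransGen.refl : x ∈ R)
  exact hT y hy hx

theorem eq_of_reflTransGen_avoidingStep_of_mem (h : ReflTransGen (AvoidingStep f T) x y)
    (hy : y ∈ T) : x = y := by
  rcases h.cases_tail with h | ⟨_, -, -, hy'⟩
  · exact h.symm
  · exact absurd hy hy'

theorem eq_of_reflTransGen_avoidingStep (hf : Injective f) (hx : x ∈ T) (hy : y ∈ T)
    (hxz : ReflTransGen (AvoidingStep f T) x z) (hyz : ReflTransGen (AvoidingStep f T) y z) :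
    x = y := by
  have hunique : Relator.RightUnique (swap (AvoidingStep f T)) :=
    fun _ _ _ h₁ h₂ => hf (h₁.1.trans h₂.1.symm)
  rcases ReflTransGen.total_of_right_unique hunique hxz.swap hyz.swap with h | h
  · exact (eq_of_reflTransGen_avoidingStep_of_mem h.swap hx).symm
  · exact eq_of_reflTransGen_avoidingStep_of_mem h.swap hy

end FirstReturn

section Menger

variable {V κ : Type*} {E : Finset (V × V)} {a b : V}

/-- The source of an edge of the multigraph obtained from `E` by adding `κ` parallel return edges
`Sum.inr i` from `b` to `a`. -/
def closedSource (b : V) : E ⊕ κ → V :=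
  Sum.elim (fun e => e.1.1) fun _ => b

/-- The target of an edge of the multigraph obtained from `E` by adding `κ` parallel return edges
`Sum.inr i` from `b` to `a`. -/
def closedTarget (a : V) : E ⊕ κ → V :=
  Sum.elim (fun e => e.1.2) fun _ => a

/-- The possible successors of an edge in a system of edge-disjoint closed walks using every return
edge. An edge of `E` which is its own successor counts as unused. -/
def ClosedStep (a b : V) (x y : E ⊕ κ) : Prop :=
  closedTarget a x = closedSource b y ∨ ∃ e, x = .inl e ∧ y = .inl e

theorem exists_injective_closedStep [Fintype κ]
    (hcut : ∀ C ⊆ E, IsTransversal (PathIn E a b) C → Fintype.card κ ≤ C.card) :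
    ∃ f : E ⊕ κ → E ⊕ κ, Injective f ∧ ∀ x, ClosedStep a b x (f x) := by
  refine (Fintype.all_card_le_filter_rel_iff_exists_injective _).1 fun T => ?_
  set N : Finset (E ⊕ κ) := {y | ∃ x ∈ T, ClosedStep a b x y}
  have hmem {x y : E ⊕ κ} (hx : x ∈ T) (hxy : ClosedStep a b x y) : y ∈ N :=
    Finset.mem_filter.2 ⟨Finset.mem_univ y, x, hx, hxy⟩
  have hleft : T.toLeft ⊆ N.toLeft := fun e he =>
    Finset.mem_toLeft.2 (hmem (Finset.mem_toLeft.1 he) (.inr ⟨e, rfl, rfl⟩))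
  have hleft_card := Finset.card_le_card hleft
  rw [← T.card_toLeft_add_card_toRight, ← N.card_toLeft_add_card_toRight]
  rcases T.toRight.eq_empty_or_nonempty with hT | ⟨i, hi⟩
  · simp only [hT, Finset.card_empty]
    omega
  have hright_card : T.toRight.card ≤ Fintype.card κ := Finset.card_le_univ _
  let W : Set V := closedTarget a '' (T : Set (E ⊕ κ))
  have ha : a ∈ W := ⟨.inr i, Finset.mem_toRight.1 hi, rfl⟩
  by_cases hb : b ∈ W
  · obtain ⟨x, hx, hxb⟩ := hb
    have hright : N.toRight = Finset.univ := Finset.eq_univ_of_forall fun j =>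
      Finset.mem_toRight.2 (hmem hx (.inl hxb))
    rw [hright, Finset.card_univ]
    omega
  · let C : Finset (V × V) := (N.toLeft \ T.toLeft).map (Embedding.subtype _)
    have hCE : C ⊆ E := Finset.map_subtype_subset _
    have hC : IsTransversal (PathIn E a b) C := fun l hl => by
      refine hl.exists_mem_of_leaves (W := W) (fun e he heW => ?_) ha hb
      obtain ⟨x, hx, hxe⟩ := heW
      have heN : ⟨e, he⟩ ∈ N.toLeft := Finset.mem_toLeft.2 (hmem hx (.inl hxe))
      by_cases heT : Sum.inl ⟨e, he⟩ ∈ T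
      · exact .inl ⟨_, heT, rfl⟩
      · exact .inr (Finset.mem_map.2 ⟨⟨e, he⟩, by simp [heN, heT], rfl⟩)
    have hC_card := hcut C hCE hC
    rw [Finset.card_map, Finset.card_sdiff_of_subset hleft] at hC_card
    omega

theorem exists_pathIn_of_reflTransGen_avoidingStep {f : E ⊕ κ → E ⊕ κ}
    (hstep : ∀ x, ClosedStep a b x (f x)) {i : κ} {y : E ⊕ κ}
    (hy : ReflTransGen (AvoidingStep f (Set.range .inr)) (.inr i) y) :
    ∃ l, PathIn E a (closedTarget a y) l ∧ ∀ e ∈ l, ∃ he : e ∈ E,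
      ReflTransGen (AvoidingStep f (Set.range .inr)) (.inr i) (.inl ⟨e, he⟩) := by
  induction hy with
  | refl => exact ⟨[], .nil _, by simp⟩
  | @tail y z hy hyz ih =>
    obtain ⟨l, hl, hreach⟩ := ih
    obtain ⟨e, rfl⟩ : ∃ e, z = .inl e := by
      rcases z with e | j
      · exact ⟨e, rfl⟩
      · exact absurd ⟨j, rfl⟩ hyz.2
    rcases hyz.1 ▸ hstep y with hye | ⟨_, rfl, h⟩
    · refine ⟨l ++ [e.1], hl.append (hye ▸ PathIn.singleton e.2), fun d hd => ?_⟩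
      rcases List.mem_append.1 hd with hd | hd
      · exact hreach d hd
      · obtain rfl := List.mem_singleton.1 hd
        exact ⟨e.2, hy.tail hyz⟩
    · exact h ▸ ⟨l, hl, hreach⟩

theorem exists_pairwise_disjoint_pathIn [Fintype κ]
    (hcut : ∀ C ⊆ E, IsTransversal (PathIn E a b) C → Fintype.card κ ≤ C.card) :
    ∃ P : κ → List (V × V), (∀ i, PathIn E a b (P i)) ∧ Pairwise (List.Disjoint on P) := by
  obtain ⟨f, hf, hstep⟩ := exists_injective_closedStep hcut
  have hpath (i : κ) : ∃ l, PathIn E a b l ∧ ∀ e ∈ l, ∃ he : e ∈ E,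
      ReflTransGen (AvoidingStep f (Set.range .inr)) (.inr i) (.inl ⟨e, he⟩) := by
    obtain ⟨y, hy, j, hj⟩ := exists_reflTransGen_avoidingStep_apply_mem hf
      (Set.mem_range_self (f := Sum.inr) i)
    have hyb : closedTarget a y = b := by simpa [ClosedStep, ← hj, closedSource] using hstep y
    exact hyb ▸ exists_pathIn_of_reflTransGen_avoidingStep hstep hy
  choose P hP hreach using hpath
  refine ⟨P, hP, fun i j hij e hei hej => hij ?_⟩
  obtain ⟨_, hi⟩ := hreach i e hei
  obtain ⟨_, hj⟩ := hreach j e hej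
  exact Sum.inr_injective (eq_of_reflTransGen_avoidingStep hf (Set.mem_range_self i)
    (Set.mem_range_self j) hi hj)

end Menger

section Through

variable {V : Type*} {E C : Finset (V × V)} {s t v : V} {l m : List (V × V)}

theorem PathIn.throughPath_append (hl : PathIn E s v l) (hm : PathIn E v t m) :
    ThroughPath E s t v (l ++ m) := by
  refine ⟨hl.append hm, hl.eq_or_mem_map_snd.imp_right fun hv => ?_⟩
  rw [List.map_append]
  exact List.mem_append_left _ hv

theorem ThroughPath.exists_eq_append (hl : ThroughPath E s t v l) :
    ∃ l₁ l₂, l = l₁ ++ l₂ ∧ PathIn E s v l₁ ∧ PathIn E v t l₂ := by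
  obtain ⟨hl, rfl | hv⟩ := hl
  · exact ⟨[], l, rfl, .nil _, hl⟩
  · obtain ⟨e, he, rfl⟩ := List.mem_map.1 hv
    obtain ⟨l₁, l₂, rfl, h₁, h₂⟩ := hl.exists_eq_append_cons he
    exact ⟨l₁ ++ [e], l₂, by simp, h₁.append (.singleton (hl.mem_of_mem he)), h₂⟩

theorem IsTransversal.throughPath_of_source (hC : IsTransversal (PathIn E s v) C) :
    IsTransversal (ThroughPath E s t v) C := by
  intro l hl
  obtain ⟨l₁, l₂, rfl, h₁, -⟩ := hl.exists_eq_append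
  exact (hC l₁ h₁).imp fun _ => And.imp_left (List.mem_append_left _)

theorem IsTransversal.throughPath_of_target (hC : IsTransversal (PathIn E v t) C) :
    IsTransversal (ThroughPath E s t v) C := by
  intro l hl
  obtain ⟨l₁, l₂, rfl, -, h₂⟩ := hl.exists_eq_append
  exact (hC l₂ h₂).imp fun _ => And.imp_left (List.mem_append_right _)

theorem Acyclic.exists_pairwise_disjoint_throughPath {κ : Type*} [Fintype κ] (hE : Acyclic E)
    (hcut : ∀ C ⊆ E, IsTransversal (ThroughPath E s t v) C → Fintype.card κ ≤ C.card) :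
    ∃ P : κ → List (V × V), (∀ i, ThroughPath E s t v (P i)) ∧ Pairwise (List.Disjoint on P) := by
  obtain ⟨P, hP, hPd⟩ := exists_pairwise_disjoint_pathIn (κ := κ)
    fun C hCE hC => hcut C hCE hC.throughPath_of_source
  obtain ⟨Q, hQ, hQd⟩ := exists_pairwise_disjoint_pathIn (κ := κ)
    fun C hCE hC => hcut C hCE hC.throughPath_of_target
  refine ⟨fun i => P i ++ Q i, fun i => (hP i).throughPath_append (hQ i), fun i j hij => ?_⟩
  simp only [onFun, List.disjoint_append_left, List.disjoint_append_right]
  exact ⟨⟨hPd hij, (hE.disjoint_of_pathIn (hP j) (hQ i)).symm⟩,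
    hE.disjoint_of_pathIn (hP i) (hQ j), hQd hij⟩

end Through

section MaxDisjointThrough

variable {V : Type*} {E : Finset (V × V)} {s t v : V}

theorem card_le_card_add_one_of_throughPath {P : Finset (List (V × V))}
    (hP : ∀ l ∈ P, ThroughPath E s t v l)
    (hdisj : (P : Set (List (V × V))).Pairwise List.Disjoint) : P.card ≤ E.card + 1 := by
  have hE : IsTransversal (fun l => ThroughPath E s t v l ∧ l ≠ []) E := fun l hl =>
    (List.exists_mem_of_ne_nil l hl.2).imp fun _ he => ⟨he, hl.1.1.mem_of_mem he⟩
  have hcard := hE.card_le (P := P.erase []) (by simp +contextual [hP])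
    (hdisj.mono (by simp))
  exact Nat.le_add_of_sub_le (Finset.pred_card_le_card_erase.trans hcard)

theorem card_le_maxDisjointThrough {P : Finset (List (V × V))}
    (hP : ∀ l ∈ P, ThroughPath E s t v l)
    (hdisj : (P : Set (List (V × V))).Pairwise List.Disjoint) :
    P.card ≤ maxDisjointThrough E s t v := by
  refine le_csSup ⟨E.card + 1, ?_⟩ ⟨P, rfl, hP, hdisj⟩
  rintro _ ⟨Q, rfl, hQ, hQdisj⟩
  exact card_le_card_add_one_of_throughPath hQ hQdisj

theorem maxDisjointThrough_le_of_forall_card_le {n : ℕ} (h : ∀ P : Finset (List (V × V)),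
    (∀ l ∈ P, ThroughPath E s t v l) → (P : Set (List (V × V))).Pairwise List.Disjoint →
      P.card ≤ n) : maxDisjointThrough E s t v ≤ n := by
  refine csSup_le' ?_
  rintro _ ⟨P, rfl, hP, hdisj⟩
  exact h P hP hdisj

theorem IsTransversal.maxDisjointThrough_le {C : Finset (V × V)}
    (hC : IsTransversal (ThroughPath E s t v) C) : maxDisjointThrough E s t v ≤ C.card :=
  maxDisjointThrough_le_of_forall_card_le fun _ => hC.card_le

theorem maxDisjointThrough_le_source : maxDisjointThrough E s t v ≤ maxDisjointThrough E s t s :=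
  maxDisjointThrough_le_of_forall_card_le fun _ hP =>
    card_le_maxDisjointThrough fun l hl => ⟨(hP l hl).1, .inl rfl⟩

theorem fintypeCard_le_maxDisjointThrough {κ : Type*} [Fintype κ] {P : κ → List (V × V)}
    (hnil : ¬ ThroughPath E s t v []) (hP : ∀ i, ThroughPath E s t v (P i))
    (hdisj : Pairwise (List.Disjoint on P)) :
    Fintype.card κ ≤ maxDisjointThrough E s t v := by
  have hinj : Injective P := injective_iff_pairwise_ne.2 fun i j hij heq => by
    obtain ⟨e, he⟩ := List.exists_mem_of_ne_nil (P i) fun h => hnil (h ▸ hP i)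
    exact hdisj hij he (heq ▸ he)
  rw [← Finset.card_univ, ← Finset.card_map ⟨P, hinj⟩]
  refine card_le_maxDisjointThrough (by simpa using hP) ?_
  simpa using hdisj.range_pairwise

theorem Acyclic.exists_isTransversal_card_le (hE : Acyclic E) (hnil : ¬ ThroughPath E s t v []) :
    ∃ C ⊆ E, IsTransversal (ThroughPath E s t v) C ∧ C.card ≤ maxDisjointThrough E s t v := by
  by_contra! hcut
  obtain ⟨P, hP, hdisj⟩ := hE.exists_pairwise_disjoint_throughPath
    (κ := Fin (maxDisjointThrough E s t v + 1)) (by simpa [Nat.succ_le_iff] using hcut)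
  simpa using fintypeCard_le_maxDisjointThrough hnil hP hdisj

end MaxDisjointThrough

section Intermediacy

variable {V : Type*} [DecidableEq V] {E S C : Finset (V × V)} {s t v : V} {p : ℝ}

theorem IsTransversal.not_activeThrough_sdiff (hC : IsTransversal (ThroughPath E s t v) C) :
    ¬ ActiveThrough E (E \ C) s t v := by
  rintro ⟨l, hl, hlC⟩
  obtain ⟨e, he, heC⟩ := hC l hl
  exact (Finset.mem_sdiff.1 (hlC e he)).2 heC

theorem isTransversal_sdiff_of_not_activeThrough (hS : ¬ ActiveThrough E S s t v) :
    IsTransversal (ThroughPath E s t v) (E \ S) := by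
  intro l hl
  by_contra! hlS
  refine hS ⟨l, hl, fun e he => ?_⟩
  simpa [hl.1.mem_of_mem he] using hlS e he

theorem one_sub_intermediacy_eq_sum : 1 - intermediacy E p s t v =
    ∑ S ∈ E.powerset with ¬ ActiveThrough E S s t v, p ^ S.card * (1 - p) ^ (E.card - S.card) := by
  have htotal : ∑ S ∈ E.powerset, p ^ S.card * (1 - p) ^ (E.card - S.card) = 1 := by
    simp [Finset.sum_pow_mul_eq_add_pow]
  have hactive : intermediacy E p s t v =
      ∑ S ∈ E.powerset with ActiveThrough E S s t v,
        p ^ S.card * (1 - p) ^ (E.card - S.card) := by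
    simp only [intermediacy, mul_ite, mul_one, mul_zero, Finset.sum_filter]
  rw [hactive, sub_eq_iff_eq_add', Finset.sum_filter_add_sum_filter_not, htotal]

theorem pow_mul_pow_le_one_sub_intermediacy (hp₀ : 0 ≤ p) (hp₁ : p ≤ 1) (hSE : S ⊆ E)
    (hS : ¬ ActiveThrough E S s t v) :
    p ^ S.card * (1 - p) ^ (E.card - S.card) ≤ 1 - intermediacy E p s t v := by
  rw [one_sub_intermediacy_eq_sum]
  exact Finset.single_le_sum
    (f := fun S : Finset (V × V) => p ^ S.card * (1 - p) ^ (E.card - S.card))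
    (fun _ _ => mul_nonneg (pow_nonneg hp₀ _) (pow_nonneg (sub_nonneg.2 hp₁) _))
    (Finset.mem_filter.2 ⟨Finset.mem_powerset.2 hSE, hS⟩)

theorem one_sub_intermediacy_le (hp₀ : 0 ≤ p) (hp₁ : p ≤ 1) :
    1 - intermediacy E p s t v ≤ 2 ^ E.card * (1 - p) ^ maxDisjointThrough E s t v := by
  have hq : 0 ≤ 1 - p := sub_nonneg.2 hp₁
  have hterm : ∀ S ∈ E.powerset.filter (¬ ActiveThrough E · s t v),
      p ^ S.card * (1 - p) ^ (E.card - S.card) ≤ (1 - p) ^ maxDisjointThrough E s t v := by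
    intro S hS
    obtain ⟨hSE, hS⟩ := Finset.mem_filter.1 hS
    have hle := (isTransversal_sdiff_of_not_activeThrough hS).maxDisjointThrough_le
    rw [Finset.card_sdiff_of_subset (Finset.mem_powerset.1 hSE)] at hle
    calc p ^ S.card * (1 - p) ^ (E.card - S.card)
        ≤ (1 - p) ^ (E.card - S.card) :=
          mul_le_of_le_one_left (by positivity) (pow_le_one₀ hp₀ hp₁)
      _ ≤ (1 - p) ^ maxDisjointThrough E s t v :=
          pow_le_pow_of_le_one hq (sub_le_self _ hp₀) hle
  rw [one_sub_intermediacy_eq_sum]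
  calc _ ≤ (E.powerset.filter (¬ ActiveThrough E · s t v)).card *
          (1 - p) ^ maxDisjointThrough E s t v := by
        simpa using Finset.sum_le_card_nsmul _ _ _ hterm
    _ ≤ 2 ^ E.card * (1 - p) ^ maxDisjointThrough E s t v := by
        gcongr
        exact_mod_cast (Finset.card_filter_le _ _).trans_eq (Finset.card_powerset E)

end Intermediacy

theorem eventually_mul_pow_lt_pow_mul_pow (c : ℝ) (m : ℕ) {j k : ℕ} (hjk : j < k) :
    ∀ᶠ p : ℝ in 𝓝[<] 1, c * (1 - p) ^ k < p ^ m * (1 - p) ^ j := by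
  have hlt : ∀ᶠ p : ℝ in 𝓝[<] 1, c * (1 - p) ^ (k - j) < p ^ m := by
    refine nhdsWithin_le_nhds (ContinuousAt.eventually_lt (by fun_prop) (by fun_prop) ?_)
    simp [(Nat.sub_pos_of_lt hjk).ne']
  filter_upwards [hlt, self_mem_nhdsWithin] with p hlt (hp₁ : p < 1)
  calc c * (1 - p) ^ k = c * (1 - p) ^ (k - j) * (1 - p) ^ j := by
        rw [mul_assoc, ← pow_add, Nat.sub_add_cancel hjk.le]
    _ < p ^ m * (1 - p) ^ j := mul_lt_mul_of_pos_right hlt (pow_pos (sub_pos.2 hp₁) j)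

theorem intermediacy_gt_of_more_disjoint_general {V : Type*} [DecidableEq V]
    (E : Finset (V × V)) (hacyc : Acyclic E) (s t u v : V)
    (hsigma : maxDisjointThrough E s t v < maxDisjointThrough E s t u) :
    ∃ ε > (0 : ℝ), ∀ p : ℝ, 1 - ε < p → p < 1 →
      intermediacy E p s t v < intermediacy E p s t u := by
  have hvs : v ≠ s := by
    rintro rfl
    exact hsigma.not_ge maxDisjointThrough_le_source
  obtain ⟨C, hCE, hC, hCv⟩ := hacyc.exists_isTransversal_card_le (s := s) (t := t) (v := v)
    (by simp [ThroughPath, hvs])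
  have hcard : E.card - (E \ C).card = C.card := by
    rw [Finset.card_sdiff_of_subset hCE, Nat.sub_sub_self (Finset.card_le_card hCE)]
  have hlt : ∀ᶠ p : ℝ in 𝓝[<] 1, intermediacy E p s t v < intermediacy E p s t u := by
    filter_upwards [eventually_mul_pow_lt_pow_mul_pow (2 ^ E.card) (E \ C).card
      (hCv.trans_lt hsigma), Ioo_mem_nhdsLT zero_lt_one] with p hp ⟨hp₀, hp₁⟩
    have hv := pow_mul_pow_le_one_sub_intermediacy hp₀.le hp₁.le Finset.sdiff_subset
      hC.not_activeThrough_sdiff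
    have hu := one_sub_intermediacy_le (E := E) (s := s) (t := t) (v := u) hp₀.le hp₁.le
    rw [hcard] at hv
    linarith
  obtain ⟨r, hr, hsub⟩ := (mem_nhdsLT_iff_exists_Ioo_subset (a := (1 : ℝ))).1 hlt
  exact ⟨1 - r, sub_pos.2 hr, fun p hp hp₁ => hsub ⟨by linarith, hp₁⟩⟩

/-- If every node lies on a directed `s`–`t` path and `σ_u > σ_v`, then
there is an `ε > 0` such that `φ_u(p) > φ_v(p)` for all `p ∈ (1 − ε, 1)`. -/
theorem intermediacy_gt_of_more_disjoint {V : Type*} [Fintype V] [DecidableEq V]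
    (E : Finset (V × V)) (hacyc : Acyclic E) (s t : V)
    (hall : ∀ x : V, ∃ l, ThroughPath E s t x l) (u v : V)
    (hsigma : maxDisjointThrough E s t v < maxDisjointThrough E s t u) :
    ∃ ε > (0 : ℝ), ∀ p : ℝ, 1 - ε < p → p < 1 →
      intermediacy E p s t v < intermediacy E p s t u :=
  intermediacy_gt_of_more_disjoint_general E hacyc s t u v hsigma
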